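/- arXiv:1104.2547 — 2 statements merged into one kernel-verified Lean document; each statement's English description precedes it below -/
import Mathlib

section
/- Let p ≥ 5 be a prime and let g be a generator of (ℤ/pℤ)ˣ; for x ∈ (ℤ/pℤ)ˣ let log_g(x) denote the unique element a ∈ ℤ/(p−1)ℤ with g^a = x. Then the set C₀^B = {{log_g(x), log_g(y)} : x,y ∈ (ℤ/pℤ)ˣ \ {1, 2⁻¹, 2, −1}, x + y = 1} ∪ {{log_g(2⁻¹), log_g(−1)}} defines a C-code of length p−1 in Z_{p−1} = ℤ/(p−1)ℤ: C₀^B consists of (p−3)/2 pairwise disjoint unordered pairs of nonzero elements of Z_{p−1}, and setting C_i = {{a+i, b+i} : {a,b} ∈ C₀^B} for i ∈ Z_{p−1}, for all m ≠ k in Z_{p−1} one has C_m ∩ C_k = ∅, the simple graph on vertex set Z_{p−1} with edge set C_m ∪ C_k contains no cycle, and m and k lie in different connected components of that graph. -/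
/-! Common definitions: C-codes, even starters, even 2-starters,
and bipyramidal (perfect) one-factorizations of the graph `G_{2n+2}`. -/

/-- Translate each unordered pair in `C` by `i`. -/
def shiftSet {m : ℕ} (i : ZMod m) (C : Set (Sym2 (ZMod m))) : Set (Sym2 (ZMod m)) :=
  (Sym2.map (· + i)) '' C

/-- `C` consists of `k` pairwise disjoint unordered pairs (2-element sets) of nonzero
elements of `ZMod m`. -/
def IsPairing (m k : ℕ) (C : Set (Sym2 (ZMod m))) : Prop :=
  C.ncard = k ∧ (∀ e ∈ C, ¬ e.IsDiag) ∧ (∀ e ∈ C, (0 : ZMod m) ∉ e) ∧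
    (∀ e ∈ C, ∀ e' ∈ C, e ≠ e' → ∀ a, a ∈ e → a ∉ e')

/-- The defining condition of a C-code with columns `C_i = i + C0`:
for all `a ≠ b`, the columns `C_a` and `C_b` are disjoint, the graph on `ZMod m`
with edge set `C_a ∪ C_b` has no cycle, and `a`, `b` are in different components. -/
def CCodeCond (m : ℕ) (C0 : Set (Sym2 (ZMod m))) : Prop :=
  ∀ a b : ZMod m, a ≠ b →
    shiftSet a C0 ∩ shiftSet b C0 = ∅ ∧
    (SimpleGraph.fromEdgeSet (shiftSet a C0 ∪ shiftSet b C0)).IsAcyclic ∧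
    ¬ (SimpleGraph.fromEdgeSet (shiftSet a C0 ∪ shiftSet b C0)).Reachable a b

/-- `C0` defines a C-code of length `2n`. -/
def IsCCode (n : ℕ) (C0 : Set (Sym2 (ZMod (2*n)))) : Prop :=
  IsPairing (2*n) (n-1) C0 ∧ CCodeCond (2*n) C0

/-- An even starter in `ZMod (2n)`. -/
def IsEvenStarter (n : ℕ) (S : Set (Sym2 (ZMod (2*n)))) : Prop :=
  IsPairing (2*n) (n-1) S ∧
  ∀ i : ZMod (2*n), i ≠ 0 → i ≠ (n : ZMod (2*n)) →
    ∃ x y : ZMod (2*n), s(x, y) ∈ S ∧ (i = x - y ∨ i = y - x)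

/-- An even starter in `ZMod m` for even `m`, phrased with `n = m / 2`. -/
def IsEvenStarterMod (m : ℕ) (S : Set (Sym2 (ZMod m))) : Prop :=
  IsPairing m (m / 2 - 1) S ∧
  ∀ i : ZMod m, i ≠ 0 → i ≠ ((m / 2 : ℕ) : ZMod m) →
    ∃ x y : ZMod m, s(x, y) ∈ S ∧ (i = x - y ∨ i = y - x)

/-- Vertices of `G_{2n+2}`: `Sum.inl i` for `i ∈ ZMod (2n)`, and `Sum.inr false = ∞₁`,
`Sum.inr true = ∞₂`. -/
abbrev Vtx (n : ℕ) : Type := ZMod (2*n) ⊕ Bool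

/-- The graph `G_{2n+2}`: all pairs of distinct vertices are adjacent except
`{∞₁, ∞₂}` and the pairs `{i, i+n}` for `i ∈ ZMod (2n)`. -/
def Ggraph (n : ℕ) : SimpleGraph (Vtx n) :=
  SimpleGraph.fromRel fun u v =>
    match u, v with
    | Sum.inl i, Sum.inl j => j ≠ i + (n : ZMod (2*n))
    | Sum.inl _, Sum.inr _ => True
    | Sum.inr _, Sum.inl _ => True
    | Sum.inr _, Sum.inr _ => False

/-- The permutation `σ^i` (rotation by `i` on `ZMod (2n)`, fixing `∞₁` and `∞₂`). -/
def vshift (n : ℕ) (i : ZMod (2*n)) : Vtx n → Vtx n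
  | Sum.inl x => Sum.inl (x + i)
  | Sum.inr b => Sum.inr b

/-- The involution swapping `∞₁` and `∞₂` and fixing all elements of `ZMod (2n)`. -/
def iotaSwap (n : ℕ) : Vtx n → Vtx n
  | Sum.inl x => Sum.inl x
  | Sum.inr b => Sum.inr (!b)

/-- `F` is a perfect matching (one-factor) of `G_{2n+2}`. -/
def IsOneFactor (n : ℕ) (F : Set (Sym2 (Vtx n))) : Prop :=
  F ⊆ (Ggraph n).edgeSet ∧ ∀ v : Vtx n, ∃! e, e ∈ F ∧ v ∈ e

/-- A bipyramidal one-factorization of `G_{2n+2}`: `2n` pairwise edge-disjoint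
one-factors whose union is the whole edge set, with `F i = σ^i (F 0)`. -/
def IsBipyramidalOF (n : ℕ) (F : ZMod (2*n) → Set (Sym2 (Vtx n))) : Prop :=
  (∀ i, IsOneFactor n (F i)) ∧ (∀ i j, i ≠ j → F i ∩ F j = ∅) ∧
    (⋃ i, F i) = (Ggraph n).edgeSet ∧
    ∀ i, F i = (Sym2.map (vshift n i)) '' (F 0)

/-- The graph with edge set `E` is a Hamiltonian cycle: it is connected and every
vertex has degree 2. -/
def IsHamCycleOn {V : Type} (E : Set (Sym2 V)) : Prop :=
  (SimpleGraph.fromEdgeSet E).Connected ∧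
    ∀ v : V, ((SimpleGraph.fromEdgeSet E).neighborSet v).ncard = 2

/-- A bipyramidal perfect one-factorization of `G_{2n+2}`. -/
def IsBipyramidalP1F (n : ℕ) (F : ZMod (2*n) → Set (Sym2 (Vtx n))) : Prop :=
  IsBipyramidalOF n F ∧ ∀ j k, j ≠ k → IsHamCycleOn (F j ∪ F k)

/-- An even starter in the multiplicative group `(ZMod p)ˣ`. -/
def IsMulEvenStarter (p : ℕ) (S : Set (Sym2 ((ZMod p)ˣ))) : Prop :=
  S.ncard = (p - 3) / 2 ∧ (∀ e ∈ S, ¬ e.IsDiag) ∧ (∀ e ∈ S, (1 : (ZMod p)ˣ) ∉ e) ∧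
    (∀ e ∈ S, ∀ e' ∈ S, e ≠ e' → ∀ a, a ∈ e → a ∉ e') ∧
    ∀ u : (ZMod p)ˣ, u ≠ 1 → u ≠ -1 →
      ∃ x y : (ZMod p)ˣ, s(x, y) ∈ S ∧ (u = x⁻¹ * y ∨ u = x * y⁻¹)

/-- The number of pairs in `S` whose difference (in either order) is `d`. -/
noncomputable def diffCount (m : ℕ) (d : ℕ) (S : Set (Sym2 (ZMod m))) : ℕ :=
  {e ∈ S | ∃ x y : ZMod m, e = s(x, y) ∧
    (y - x = (d : ZMod m) ∨ x - y = (d : ZMod m))}.ncard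

/-- `(S0, S1)` is an even 2-starter in `ZMod (2n)`: each `Sᵢ` consists of `n-1`
unordered pairs of elements of `ZMod (2n) \ {i}`, and every `d` with `1 ≤ d ≤ n-1`
occurs exactly twice as a difference of a pair, counted over both sets. -/
def IsEven2Starter (n : ℕ) (S0 S1 : Set (Sym2 (ZMod (2*n)))) : Prop :=
  S0.ncard = n - 1 ∧ S1.ncard = n - 1 ∧
    (∀ e ∈ S0, ¬ e.IsDiag) ∧ (∀ e ∈ S1, ¬ e.IsDiag) ∧
    (∀ e ∈ S0, (0 : ZMod (2*n)) ∉ e) ∧ (∀ e ∈ S1, (1 : ZMod (2*n)) ∉ e) ∧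
    ∀ d : ℕ, 1 ≤ d → d ≤ n - 1 →
      diffCount (2*n) d S0 + diffCount (2*n) d S1 = 2

/-- The `i`-th column induced by `(S0, S1)`:
`C_i = {{x + 2⌊ī/2⌋, y + 2⌊ī/2⌋} : {x,y} ∈ S_{ī mod 2}}` where `ī = i.val`. -/
def qCol (n : ℕ) (S0 S1 : Set (Sym2 (ZMod (2*n)))) (i : ZMod (2*n)) :
    Set (Sym2 (ZMod (2*n))) :=
  (Sym2.map (· + ((2 * (i.val / 2) : ℕ) : ZMod (2*n)))) ''
    (if i.val % 2 = 0 then S0 else S1)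

/-- The quasi-C-code condition for the column family induced by `(S0, S1)`. -/
def QuasiCCodeCond (n : ℕ) (S0 S1 : Set (Sym2 (ZMod (2*n)))) : Prop :=
  ∀ a b : ZMod (2*n), a ≠ b →
    qCol n S0 S1 a ∩ qCol n S0 S1 b = ∅ ∧
    (SimpleGraph.fromEdgeSet (qCol n S0 S1 a ∪ qCol n S0 S1 b)).IsAcyclic ∧
    ¬ (SimpleGraph.fromEdgeSet (qCol n S0 S1 a ∪ qCol n S0 S1 b)).Reachable a b

/-!
For `a : ℤ/(p-1)ℤ` put `A = g ^ a`. Exponentiation `i ↦ g ^ i` identifies `ℤ/(p-1)ℤ` with the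
nonzero elements of `ℤ/pℤ` and turns translation by `a` into multiplication by `A`. It carries the
column `C_a` to the matching by pairs of sum `A`, with the roles of `A / 2` and `2 * A` interchanged
and the pair `{0, A}` left out. Let `M_A` be this matching with `{0, A}` restored: it is the
matching of an involution of `ℤ/pℤ` that exchanges `A / 2` with `-A` and whose only fixed point is
`2 * A`.

Let `A ≠ B` and suppose that a component `K` of `M_A ∪ M_B` misses `-A`, hence also `A / 2`. Then it
misses `-B`, and by parity it contains both or neither of `2 * A` and `2 * B`. Accordingly
`K ∪ {-A, -B, A + B}` or `K` itself is stable under `x ↦ A - x` and `x ↦ B - x`, hence under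
translation by `B - A`, so it is all of `ℤ/pℤ`, although it does not contain `A / 2`. Thus
`M_A ∪ M_B` is connected; having at most `p - 1` edges, it is a tree, and `M_A`, `M_B` are disjoint.
In this tree `A` and `B` are both adjacent to `0`, so deleting the vertex `0`, which leaves the
image of `C_a ∪ C_b`, separates them.
-/

section Involution

variable {V W : Type*} {σ τ : V → V}

/-- The graph of a self-map `σ`: it joins each `x` to `σ x` when the two differ. It is used for
involutions, where it is the matching formed by the 2-cycles of `σ`. -/
def involutionGraph (σ : V → V) : SimpleGraph V := SimpleGraph.fromRel (σ · = ·)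

namespace involutionGraph

theorem adj_iff (hσ : Function.Involutive σ) {x y : V} :
    (involutionGraph σ).Adj x y ↔ x ≠ y ∧ σ x = y := by
  rw [involutionGraph, SimpleGraph.fromRel_adj, hσ.eq_iff, eq_comm (a := x), or_self]

theorem reachable_apply (σ : V → V) (x : V) : (involutionGraph σ).Reachable x (σ x) := by
  by_cases h : x = σ x
  · exact h ▸ SimpleGraph.Reachable.refl x
  · exact SimpleGraph.Adj.reachable ((SimpleGraph.fromRel_adj _ _ _).2 ⟨h, .inl rfl⟩)

theorem connected_sup_of_forall_mapsTo {c : V}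
    (h : ∀ K : Set V, K.Nonempty → Set.MapsTo σ K K → Set.MapsTo τ K K → c ∈ K) :
    (involutionGraph σ ⊔ involutionGraph τ).Connected := by
  have reachable_c (x : V) : (involutionGraph σ ⊔ involutionGraph τ).Reachable x c :=
    h {y | (involutionGraph σ ⊔ involutionGraph τ).Reachable x y} ⟨x, .refl x⟩
      (fun y hy ↦ hy.trans ((reachable_apply σ y).mono le_sup_left))
      (fun y hy ↦ hy.trans ((reachable_apply τ y).mono le_sup_right))
  exact (SimpleGraph.connected_iff _).2
    ⟨fun x y ↦ (reachable_c x).trans (reachable_c y).symm, ⟨c⟩⟩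

theorem two_mul_ncard_edgeSet_add_ncard_fixedPoints [Finite V] (hσ : Function.Involutive σ) :
    2 * (involutionGraph σ).edgeSet.ncard + (Function.fixedPoints σ).ncard = Nat.card V := by
  classical
  have := Fintype.ofFinite V
  have degree_eq (x : V) :
      (involutionGraph σ).degree x = if x ∈ (Function.fixedPoints σ)ᶜ then 1 else 0 := by
    have : (involutionGraph σ).neighborFinset x = if σ x = x then ∅ else {σ x} := by
      ext y
      rw [SimpleGraph.mem_neighborFinset, adj_iff hσ]
      split_ifs <;> simp <;> grind
    rw [← SimpleGraph.card_neighborFinset_eq_degree, this]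
    by_cases h : σ x = x <;> simp [Function.IsFixedPt, h]
  have two_mul_card := (involutionGraph σ).sum_degrees_eq_twice_card_edges
  rw [Finset.sum_congr rfl fun x _ ↦ degree_eq x, Finset.sum_boole] at two_mul_card
  rw [← SimpleGraph.coe_edgeFinset, Set.ncard_coe_finset, ← two_mul_card, Nat.cast_id,
    ← Set.ncard_coe_finset, Finset.coe_filter_univ, Set.ofPred_mem_eq, add_comm,
    Set.ncard_add_ncard_compl]

theorem ncard_edgeSet_of_unique_fixedPoint [Finite V] (hσ : Function.Involutive σ) {c : V}
    (hc : ∀ x, σ x = x ↔ x = c) : (involutionGraph σ).edgeSet.ncard = (Nat.card V - 1) / 2 := by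
  have card_eq := two_mul_ncard_edgeSet_add_ncard_fixedPoints hσ
  have : Function.fixedPoints σ = {c} := Set.ext hc
  rw [this, Set.ncard_singleton] at card_eq
  omega

-- A connected graph on `V` has at least `|V| - 1` edges, and two matchings that each miss a vertex
-- have at most that many, with equality only if they share no edge.
theorem isTree_sup_and_disjoint_of_connected [Finite V] (hσ : Function.Involutive σ)
    (hτ : Function.Involutive τ) (hσ' : (Function.fixedPoints σ).Nonempty)
    (hτ' : (Function.fixedPoints τ).Nonempty)
    (hconn : (involutionGraph σ ⊔ involutionGraph τ).Connected) :
    (involutionGraph σ ⊔ involutionGraph τ).IsTree ∧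
      Disjoint (involutionGraph σ) (involutionGraph τ) := by
  have card_le := hconn.card_vert_le_card_edgeSet_add_one
  have union_inter := Set.ncard_union_add_ncard_inter
    (involutionGraph σ).edgeSet (involutionGraph τ).edgeSet
  have card_σ := two_mul_ncard_edgeSet_add_ncard_fixedPoints hσ
  have card_τ := two_mul_ncard_edgeSet_add_ncard_fixedPoints hτ
  have fixed_σ := hσ'.ncard_pos
  have fixed_τ := hτ'.ncard_pos
  rw [SimpleGraph.isTree_iff_connected_and_card, ← SimpleGraph.disjoint_edgeSet,
    Set.disjoint_iff_inter_eq_empty, ← Set.ncard_eq_zero]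
  rw [Nat.card_coe_set_eq, SimpleGraph.edgeSet_sup] at *
  exact ⟨⟨hconn, by omega⟩, by omega⟩

end involutionGraph

theorem odd_ncard_iff_mem_of_unique_fixedPoint (hσ : Function.Involutive σ) {c : V}
    (hc : ∀ x, σ x = x ↔ x = c) {K : Set V} [Finite K] (hK : Set.MapsTo σ K K) :
    Odd K.ncard ↔ c ∈ K := by
  have card_eq := involutionGraph.two_mul_ncard_edgeSet_add_ncard_fixedPoints
    (σ := hK.restrict σ K K) fun x ↦ Subtype.ext (hσ x)
  have fixedPoints_eq : Subtype.val '' Function.fixedPoints (hK.restrict σ K K) = K ∩ {c} := by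
    ext x
    simp only [Set.mem_image, Subtype.exists, exists_and_right, exists_eq_right,
      Function.mem_fixedPoints, Function.IsFixedPt, Subtype.ext_iff, Set.MapsTo.val_restrict_apply,
      hc, exists_prop, Set.mem_inter_iff, Set.mem_singleton_iff]
  rw [← Set.ncard_image_of_injective _ Subtype.val_injective, fixedPoints_eq,
    Nat.card_coe_set_eq] at card_eq
  by_cases hcK : c ∈ K
  · rw [Set.inter_eq_right.2 (Set.singleton_subset_iff.2 hcK), Set.ncard_singleton] at card_eq
    exact iff_of_true ⟨_, card_eq.symm⟩ hcK
  · rw [Set.inter_singleton_eq_empty.2 hcK, Set.ncard_empty] at card_eq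
    exact iff_of_false (Nat.not_odd_iff_even.2 (even_iff_two_dvd.2 ⟨_, card_eq.symm⟩)) hcK

theorem not_reachable_comap_of_isAcyclic {T : SimpleGraph V} (hT : T.IsAcyclic) {f : W → V}
    {c : V} (hc : c ∉ Set.range f) {a b : W} (hab : f a ≠ f b) (ha : T.Adj c (f a))
    (hb : T.Adj c (f b)) : ¬ (T.comap f).Reachable a b := by
  -- A walk from `f a` to `f b` that avoids `c` survives the deletion of the edge from `c` to `f b`.
  intro hreach
  have hbridge : ¬ (T.deleteEdges {s(c, f b)}).Reachable c (f b) :=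
    SimpleGraph.isAcyclic_iff_forall_adj_isBridge.1 hT hb
  have hca : (T.deleteEdges {s(c, f b)}).Adj c (f a) := by simp [ha, hab, hb.ne]
  let φ : T.comap f →g T.deleteEdges {s(c, f b)} := ⟨f, fun {i j} (hij : T.Adj _ _) ↦ by
    have hi : f i ≠ c := fun h ↦ hc ⟨i, h⟩
    have hj : f j ≠ c := fun h ↦ hc ⟨j, h⟩
    simp [hij, hi, hj]⟩
  exact hbridge (hca.reachable.trans (hreach.map φ))

end Involution

section PrimeField

theorem eq_univ_of_forall_add_mem {p : ℕ} [Fact p.Prime] {d : ZMod p} (hd : d ≠ 0)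
    {S : Set (ZMod p)} (hne : S.Nonempty) (hS : ∀ x ∈ S, x + d ∈ S) : S = Set.univ := by
  obtain ⟨x₀, hx₀⟩ := hne
  have add_mul_mem (n : ℕ) : x₀ + n * d ∈ S := by
    induction n with
    | zero => simpa using hx₀
    | succ k ih => simpa [add_mul, add_assoc] using hS _ ih
  refine Set.eq_univ_of_forall fun y ↦ ?_
  have := add_mul_mem ((y - x₀) / d).val
  rwa [ZMod.natCast_zmod_val, div_mul_cancel₀ _ hd, add_sub_cancel] at this

theorem eq_univ_of_forall_sub_mem {p : ℕ} [Fact p.Prime] {A B : ZMod p} (hAB : A ≠ B)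
    {S : Set (ZMod p)} (hne : S.Nonempty) (hA : ∀ x ∈ S, A - x ∈ S) (hB : ∀ x ∈ S, B - x ∈ S) :
    S = Set.univ :=
  eq_univ_of_forall_add_mem (sub_ne_zero.2 hAB.symm) hne fun x hx ↦ by
    have : x + (B - A) = B - (A - x) := by ring
    exact this ▸ hB _ (hA x hx)

end PrimeField

section TwistedReflection

variable {F : Type*} [Field F] [DecidableEq F] {A x y : F}

/-- The reflection `x ↦ A - x` conjugated by the transposition of `A / 2` and `2 * A`. It fixes
`2 * A` instead of `A / 2` and exchanges `-A` with `A / 2` instead of `2 * A`; for `A = 1` its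
2-cycles other than `{0, 1}` are the pairs whose logarithms make up `C₀^B`. -/
def twistedReflection (A : F) (x : F) : F :=
  Equiv.swap (A / 2) (2 * A) (A - Equiv.swap (A / 2) (2 * A) x)

namespace twistedReflection

theorem involutive (A : F) : Function.Involutive (twistedReflection A) := fun x ↦ by
  simp only [twistedReflection, Equiv.swap_apply_self, sub_sub_cancel]

theorem mul_mul {c : F} (hc : c ≠ 0) (A x : F) :
    twistedReflection (c * A) (c * x) = c * twistedReflection A x := by
  have hswap := (mul_right_injective₀ hc).swap_apply (A / 2) (2 * A)
  simp only [← mul_div_assoc, mul_left_comm c 2] at hswap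
  simp only [twistedReflection, hswap, ← mul_sub]

theorem adj_mul_iff {c : F} (hc : c ≠ 0) :
    (involutionGraph (twistedReflection (c * A))).Adj (c * x) (c * y) ↔
      (involutionGraph (twistedReflection A)).Adj x y := by
  simp only [involutionGraph.adj_iff (involutive _), mul_mul hc, ne_eq, mul_right_inj' hc]

section TwoNeZero

variable [NeZero (2 : F)]

theorem apply_eq_self_iff : twistedReflection A x = x ↔ x = 2 * A := by
  have sub_eq_self_iff (y : F) : A - y = y ↔ y = A / 2 := by
    rw [sub_eq_iff_eq_add, ← two_mul, eq_div_iff two_ne_zero, mul_comm, eq_comm]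
  rw [twistedReflection, Equiv.swap_apply_eq_iff, sub_eq_self_iff, Equiv.swap_apply_eq_iff,
    Equiv.swap_apply_left]

theorem apply_of_ne (h₁ : x ≠ A / 2) (h₂ : x ≠ 2 * A) (h₃ : x ≠ -A) :
    twistedReflection A x = A - x := by
  rw [twistedReflection, Equiv.swap_apply_of_ne_of_ne h₁ h₂, Equiv.swap_apply_of_ne_of_ne]
  · exact fun h ↦ h₁ (by linear_combination -h + sub_half A)
  · exact fun h ↦ h₃ (by linear_combination -h)

theorem apply_self (hA : A ≠ 0) : twistedReflection A A = 0 := by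
  rw [apply_of_ne, sub_self] <;> grind [two_ne_zero' F]

theorem apply_zero (hA : A ≠ 0) : twistedReflection A 0 = A :=
  (involutive A).eq_iff.2 (apply_self hA).symm

theorem adj_zero_self (hA : A ≠ 0) : (involutionGraph (twistedReflection A)).Adj 0 A :=
  (involutionGraph.adj_iff (involutive A)).2
    ⟨hA.symm, apply_zero hA⟩

end TwoNeZero

section ThreeNeZero

variable [NeZero (3 : F)]

theorem apply_half (hA : A ≠ 0) : twistedReflection A (A / 2) = -A := by
  have h3A : 3 * A ≠ 0 := mul_ne_zero three_ne_zero hA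
  rw [twistedReflection, Equiv.swap_apply_left, Equiv.swap_apply_of_ne_of_ne] <;> grind

theorem apply_neg (hA : A ≠ 0) : twistedReflection A (-A) = A / 2 := by
  rw [← apply_half hA, involutive A]

end ThreeNeZero

variable [NeZero (2 : F)] [NeZero (3 : F)]

theorem adj_iff (hA : A ≠ 0) : (involutionGraph (twistedReflection A)).Adj x y ↔
    (x + y = A ∧ x ∉ ({A / 2, 2 * A, -A} : Set F)) ∨ s(x, y) = s(A / 2, -A) := by
  have h2 : (2 : F) ≠ 0 := two_ne_zero
  have h3A : 3 * A ≠ 0 := mul_ne_zero three_ne_zero hA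
  simp only [involutionGraph.adj_iff (involutive A), Set.mem_insert_iff, Set.mem_singleton_iff,
    Sym2.eq_iff]
  by_cases h₁ : x = A / 2
  · subst h₁
    rw [apply_half hA]
    grind
  by_cases h₂ : x = 2 * A
  · rw [apply_eq_self_iff.2 h₂]
    grind
  by_cases h₃ : x = -A
  · subst h₃
    rw [apply_neg hA]
    grind
  rw [apply_of_ne h₁ h₂ h₃]
  grind

theorem neg_mem_of_neg_mem {B : F} (hA : A ≠ 0) (hB : B ≠ 0) (hAB : A ≠ B) {K : Set F}
    (hKA : Set.MapsTo (twistedReflection A) K K) (hKB : Set.MapsTo (twistedReflection B) K K)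
    (h : -A ∈ K) : -B ∈ K := by
  by_cases hA' : A = -2 * B
  · have : -B = twistedReflection A (-A) := by
      rw [apply_neg hA, hA']
      field
    exact this ▸ hKA h
  by_cases hB' : B = -2 * A
  · have : -B = twistedReflection B (-A) := by
      rw [← apply_half hB, hB']
      field_simp
    exact this ▸ hKB h
  have hsum : twistedReflection B (-A) = B + A := by
    rw [apply_of_ne, sub_neg_eq_add] <;> grind [two_ne_zero' F]
  have hneg : twistedReflection A (B + A) = -B := by
    rw [apply_of_ne, sub_add_cancel_right] <;> grind [two_ne_zero' F]
  exact hneg ▸ hKA (hsum ▸ hKB h)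

theorem sub_mem_of_mapsTo (hA : A ≠ 0) {K : Set F} (hK : Set.MapsTo (twistedReflection A) K K)
    (hneg : -A ∉ K) (hx : x ∈ K) (hx' : x ≠ 2 * A) : A - x ∈ K := by
  have hhalf : A / 2 ∉ K := fun h ↦ hneg (apply_half hA ▸ hK h)
  rw [← apply_of_ne (ne_of_mem_of_not_mem hx hhalf) hx' (ne_of_mem_of_not_mem hx hneg)]
  exact hK hx

theorem sub_mem_union_of_mapsTo (hA : A ≠ 0) (B : F) {K : Set F}
    (hK : Set.MapsTo (twistedReflection A) K K) (hneg : -A ∉ K) (htwo : 2 * A ∈ K)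
    (hx : x ∈ K ∪ {-A, -B, A + B}) : A - x ∈ K ∪ {-A, -B, A + B} := by
  rcases hx with hx | rfl | rfl | rfl
  · by_cases hx' : x = 2 * A
    · exact .inr (.inl (by rw [hx']; ring))
    · exact .inl (sub_mem_of_mapsTo hA hK hneg hx hx')
  · exact .inl (by rwa [sub_neg_eq_add, ← two_mul])
  · exact .inr (.inr (.inr (sub_neg_eq_add A B)))
  · exact .inr (.inr (.inl (sub_add_cancel_left A B)))

end twistedReflection

end TwistedReflection

section Tree

open twistedReflection

variable {p : ℕ} [Fact p.Prime] [NeZero (2 : ZMod p)] [NeZero (3 : ZMod p)] {A B : ZMod p}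

theorem neg_mem_of_mapsTo_twistedReflection (hA : A ≠ 0) (hB : B ≠ 0) (hAB : A ≠ B)
    {K : Set (ZMod p)} (hne : K.Nonempty) (hKA : Set.MapsTo (twistedReflection A) K K)
    (hKB : Set.MapsTo (twistedReflection B) K K) : -A ∈ K := by
  by_contra hnegA
  have hnegB : -B ∉ K := fun h ↦ hnegA (neg_mem_of_neg_mem hB hA hAB.symm hKB hKA h)
  have hhalf : A / 2 ∉ K := fun h ↦ hnegA (apply_half hA ▸ hKA h)
  have htwo : 2 * A ∈ K ↔ 2 * B ∈ K := by
    rw [← odd_ncard_iff_mem_of_unique_fixedPoint (involutive A) (fun _ ↦ apply_eq_self_iff) hKA,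
      odd_ncard_iff_mem_of_unique_fixedPoint (involutive B) (fun _ ↦ apply_eq_self_iff) hKB]
  by_cases htwoA : 2 * A ∈ K
  · have htwoB := htwo.1 htwoA
    have huniv : K ∪ {-A, -B, A + B} = Set.univ :=
      eq_univ_of_forall_sub_mem hAB hne.inl
        (fun x ↦ sub_mem_union_of_mapsTo hA B hKA hnegA htwoA)
        (fun x ↦ by
          rw [Set.insert_comm, add_comm A B]
          exact sub_mem_union_of_mapsTo hB A hKB hnegB htwoB)
    have hA' : A ≠ -2 * B := fun h ↦ hnegA (by rw [h]; simpa using htwoB)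
    rcases huniv.symm ▸ Set.mem_univ (A / 2) with h | h | h | h
    all_goals grind [two_ne_zero' (ZMod p), three_ne_zero' (ZMod p)]
  · have huniv : K = Set.univ := eq_univ_of_forall_sub_mem hAB hne
      (fun x hx ↦ sub_mem_of_mapsTo hA hKA hnegA hx (ne_of_mem_of_not_mem hx htwoA))
      (fun x hx ↦ sub_mem_of_mapsTo hB hKB hnegB hx (ne_of_mem_of_not_mem hx (htwo.not.1 htwoA)))
    exact hhalf (huniv ▸ Set.mem_univ _)

theorem isTree_sup_and_disjoint_twistedReflection (hA : A ≠ 0) (hB : B ≠ 0) (hAB : A ≠ B) :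
    (involutionGraph (twistedReflection A) ⊔ involutionGraph (twistedReflection B)).IsTree ∧
      Disjoint (involutionGraph (twistedReflection A)) (involutionGraph (twistedReflection B)) :=
  involutionGraph.isTree_sup_and_disjoint_of_connected (involutive A) (involutive B)
    ⟨2 * A, apply_eq_self_iff.2 rfl⟩ ⟨2 * B, apply_eq_self_iff.2 rfl⟩
    (involutionGraph.connected_sup_of_forall_mapsTo fun _ ↦
      neg_mem_of_mapsTo_twistedReflection hA hB hAB)

end Tree

section Code

variable {m : ℕ}

theorem isPairing_edgeSet_comap {V : Type*} {σ : V → V} (hσ : Function.Involutive σ)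
    {f : ZMod m → V} (hf : Function.Injective f) (h0 : σ (f 0) ∉ Set.range f) :
    IsPairing m ((involutionGraph σ).comap f).edgeSet.ncard
      ((involutionGraph σ).comap f).edgeSet := by
  have adj_iff {i j : ZMod m} : ((involutionGraph σ).comap f).Adj i j ↔ f i ≠ f j ∧ σ (f i) = f j :=
    involutionGraph.adj_iff hσ
  refine ⟨rfl, fun e he ↦ SimpleGraph.not_isDiag_of_mem_edgeSet _ he, fun e he hzero ↦ ?_,
    fun e he e' he' hne a ha ha' ↦ hne ?_⟩
  · obtain ⟨j, rfl⟩ := Sym2.mem_iff_exists.1 hzero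
    exact h0 ⟨j, (adj_iff.1 he).2.symm⟩
  · obtain ⟨i, rfl⟩ := Sym2.mem_iff_exists.1 ha
    obtain ⟨j, rfl⟩ := Sym2.mem_iff_exists.1 ha'
    exact congrArg (s(a, ·)) (hf ((adj_iff.1 he).2.symm.trans (adj_iff.1 he').2))

theorem mk_mem_shiftSet {a i j : ZMod m} {C : Set (Sym2 (ZMod m))} :
    s(i, j) ∈ shiftSet a C ↔ s(i - a, j - a) ∈ C := by
  have map_sub : Sym2.map (· + a) s(i - a, j - a) = s(i, j) := by
    simp only [Sym2.map_mk, sub_add_cancel]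
  rw [← map_sub, shiftSet, (Sym2.map.injective (add_left_injective a)).mem_set_image]

variable {F : Type*} [Field F]

/-- The map `i ↦ g ^ i` from exponents to the field, where `e` is the identification of `ℤ/mℤ` with
the cyclic group `Fˣ` that a generator `g` determines. The discrete logarithm is its inverse
on `Fˣ`. -/
def discreteExp (e : Multiplicative (ZMod m) ≃* Fˣ) (i : ZMod m) : F :=
  e (.ofAdd i)

namespace discreteExp

variable (e : Multiplicative (ZMod m) ≃* Fˣ)

theorem ne_zero (i : ZMod m) : discreteExp e i ≠ 0 := Units.ne_zero _

theorem map_zero : discreteExp e 0 = 1 := by simp [discreteExp]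

theorem map_add (i j : ZMod m) : discreteExp e (i + j) = discreteExp e i * discreteExp e j := by
  simp [discreteExp]

theorem injective : Function.Injective (discreteExp e) :=
  Units.val_injective.comp (e.injective.comp Multiplicative.ofAdd.injective)

theorem zero_notMem_range : 0 ∉ Set.range (discreteExp e) := fun ⟨i, hi⟩ ↦ ne_zero e i hi

theorem exists_eq_of_ne_zero {x : F} (hx : x ≠ 0) : ∃ i, discreteExp e i = x :=
  ⟨(e.symm (Units.mk0 x hx)).toAdd, by simp [discreteExp]⟩

theorem zmodMulEquivOfGenerator_apply [NeZero m] {g : Fˣ} (hg : ∀ u, u ∈ Subgroup.zpowers g)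
    (hm : Nat.card Fˣ = m) (i : ZMod m) :
    discreteExp (zmodMulEquivOfGenerator hg hm) i = (g ^ i.val : Fˣ) := by
  have := zmodMulEquivOfGenerator_apply_ofAdd_intCast hg hm i.val
  rw [Int.cast_natCast, ZMod.natCast_zmod_val, zpow_natCast] at this
  exact congrArg Units.val this

end discreteExp

variable [DecidableEq F]

/-- The graph whose edges form the column `C_a` of the code: `i` and `j` are joined when `g ^ i` and
`g ^ j` are exchanged by the twisted reflection with parameter `g ^ a`. -/
def columnGraph (e : Multiplicative (ZMod m) ≃* Fˣ) (a : ZMod m) : SimpleGraph (ZMod m) :=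
  (involutionGraph (twistedReflection (discreteExp e a))).comap (discreteExp e)

namespace columnGraph

variable (e : Multiplicative (ZMod m) ≃* Fˣ)

theorem shiftSet_edgeSet (a b : ZMod m) :
    shiftSet b (columnGraph e a).edgeSet = (columnGraph e (a + b)).edgeSet := by
  ext q
  induction q with | h i j
  have factor (i : ZMod m) : discreteExp e i = discreteExp e b * discreteExp e (i - b) := by
    rw [← discreteExp.map_add, add_sub_cancel]
  rw [mk_mem_shiftSet, SimpleGraph.mem_edgeSet, SimpleGraph.mem_edgeSet, columnGraph, columnGraph,
    SimpleGraph.comap_adj, SimpleGraph.comap_adj, factor i, factor j, add_comm,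
    discreteExp.map_add, twistedReflection.adj_mul_iff (discreteExp.ne_zero e b)]

theorem edgeSet_zero_eq [NeZero (2 : F)] [NeZero (3 : F)] {L : Fˣ → ZMod m}
    (hL : ∀ x, discreteExp e (L x) = x) {z : Fˣ} (hz : (z : F) = 2⁻¹) :
    (columnGraph e 0).edgeSet = {q | ∃ x y : Fˣ, q = s(L x, L y) ∧
      (x : F) ∉ ({1, 2⁻¹, 2, -1} : Set F) ∧ (y : F) ∉ ({1, 2⁻¹, 2, -1} : Set F) ∧
      (x : F) + y = 1} ∪ {s(L z, L (-1))} := by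
  have mem_iff (x y : Fˣ) : s(L x, L y) ∈ (columnGraph e 0).edgeSet ↔
      (x + y = (1 : F) ∧ (x : F) ∉ ({2⁻¹, 2, -1} : Set F)) ∨ s(L x, L y) = s(L z, L (-1)) := by
    rw [SimpleGraph.mem_edgeSet, columnGraph, SimpleGraph.comap_adj, discreteExp.map_zero,
      twistedReflection.adj_iff one_ne_zero, hL, hL, one_div, mul_one,
      ← (Sym2.map.injective (discreteExp.injective e)).eq_iff]
    simp only [Sym2.map_mk, hL, hz, Units.val_neg, Units.val_one]
  ext q
  constructor
  · induction q with | h i j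
    have hlog (i : ZMod m) : L (e (.ofAdd i)) = i := discreteExp.injective e (hL _)
    rw [← hlog i, ← hlog j, mem_iff]
    rintro (⟨hsum, hx⟩ | h)
    · refine .inl ⟨_, _, rfl, ?_, ?_, hsum⟩
      all_goals
        have := (e (.ofAdd i)).ne_zero
        have := (e (.ofAdd j)).ne_zero
        grind [two_ne_zero' F]
    · exact .inr h
  · rintro (⟨x, y, rfl, hx, -, hsum⟩ | h)
    · exact (mem_iff x y).2 (.inl ⟨hsum, fun h ↦ hx (.inr h)⟩)
    · exact h ▸ (mem_iff z (-1)).2 (.inr rfl)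

theorem image_edgeSet [NeZero (2 : F)] (a : ZMod m) :
    Sym2.map (discreteExp e) '' (columnGraph e a).edgeSet =
      (involutionGraph (twistedReflection (discreteExp e a))).edgeSet \
        {s(0, discreteExp e a)} := by
  have eq_of_zero {y : F}
      (h : (involutionGraph (twistedReflection (discreteExp e a))).Adj 0 y) :
      y = discreteExp e a := by
    rw [← ((involutionGraph.adj_iff (twistedReflection.involutive _)).1 h).2,
      twistedReflection.apply_zero (discreteExp.ne_zero e a)]
  ext q
  constructor
  · rintro ⟨q, hq, rfl⟩
    induction q with | h i j
    refine ⟨hq, fun h ↦ ?_⟩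
    have : (0 : F) ∈ Sym2.map (discreteExp e) s(i, j) := h ▸ Sym2.mem_mk_left _ _
    rcases Sym2.mem_iff.1 this with h | h
    · exact discreteExp.ne_zero e i h.symm
    · exact discreteExp.ne_zero e j h.symm
  · rintro ⟨hq, hq'⟩
    induction q with | h x y
    have hx : x ≠ 0 := by
      rintro rfl
      exact hq' (congrArg (s(0, ·)) (eq_of_zero hq))
    have hy : y ≠ 0 := by
      rintro rfl
      exact hq' (Sym2.eq_swap.trans (congrArg (s(0, ·)) (eq_of_zero hq.symm)))
    obtain ⟨i, rfl⟩ := discreteExp.exists_eq_of_ne_zero e hx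
    obtain ⟨j, rfl⟩ := discreteExp.exists_eq_of_ne_zero e hy
    exact ⟨s(i, j), hq, rfl⟩

theorem ncard_edgeSet [Finite F] [NeZero (2 : F)] (a : ZMod m) :
    (columnGraph e a).edgeSet.ncard = (Nat.card F - 3) / 2 := by
  have adj_zero := twistedReflection.adj_zero_self (discreteExp.ne_zero e a)
  rw [← Set.ncard_image_of_injective _ (Sym2.map.injective (discreteExp.injective e)),
    image_edgeSet, Set.ncard_sdiff_singleton_of_mem ((SimpleGraph.mem_edgeSet _).2 adj_zero),
    involutionGraph.ncard_edgeSet_of_unique_fixedPoint (twistedReflection.involutive _)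
      fun _ ↦ twistedReflection.apply_eq_self_iff]
  omega

theorem isPairing [Finite F] [NeZero (2 : F)] :
    IsPairing m ((Nat.card F - 3) / 2) (columnGraph e 0).edgeSet := by
  rw [← ncard_edgeSet e 0]
  refine isPairing_edgeSet_comap (twistedReflection.involutive _) (discreteExp.injective e) ?_
  rw [twistedReflection.apply_self (discreteExp.ne_zero e 0)]
  exact discreteExp.zero_notMem_range e

theorem cCodeCond {p : ℕ} [Fact p.Prime] [NeZero (2 : ZMod p)] [NeZero (3 : ZMod p)]
    (e : Multiplicative (ZMod m) ≃* (ZMod p)ˣ) : CCodeCond m (columnGraph e 0).edgeSet := by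
  intro a b hab
  have ne_zero := discreteExp.ne_zero e
  have hne : discreteExp e a ≠ discreteExp e b := (discreteExp.injective e).ne hab
  obtain ⟨tree, disjoint⟩ := isTree_sup_and_disjoint_twistedReflection (ne_zero a) (ne_zero b) hne
  rw [shiftSet_edgeSet, shiftSet_edgeSet, zero_add, zero_add, ← SimpleGraph.edgeSet_sup,
    SimpleGraph.fromEdgeSet_edgeSet, ← Set.disjoint_iff_inter_eq_empty,
    SimpleGraph.disjoint_edgeSet]
  refine ⟨?_, ?_, ?_⟩
  · exact SimpleGraph.disjoint_left.2 fun i j ↦ SimpleGraph.disjoint_left.1 disjoint _ _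
  · exact tree.isAcyclic.comap ⟨discreteExp e, id⟩ (discreteExp.injective e)
  · exact not_reachable_comap_of_isAcyclic tree.isAcyclic (discreteExp.zero_notMem_range e) hne
      (.inl (twistedReflection.adj_zero_self (ne_zero a)))
      (.inr (twistedReflection.adj_zero_self (ne_zero b)))

end columnGraph

end Code

/-- Let `g` generate `(ZMod p)ˣ`, `p ≥ 5` prime, `L` the discrete
logarithm to base `g` valued in `ZMod (p-1)`, and `z` the unit with value `2⁻¹`. Then
`C₀^B = {{L x, L y} : x, y ∈ (ZMod p)ˣ \ {1, 2⁻¹, 2, -1}, x + y = 1} ∪ {{L 2⁻¹, L (-1)}}`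
consists of `(p-3)/2` pairwise disjoint unordered pairs of nonzero elements of
`ZMod (p-1)` and defines a C-code of length `p-1`. -/
theorem stmt13 (p : ℕ) [Fact p.Prime] (hp : 5 ≤ p)
    (g : (ZMod p)ˣ) (hg : ∀ u : (ZMod p)ˣ, u ∈ Subgroup.zpowers g)
    (L : (ZMod p)ˣ → ZMod (p - 1)) (hL : ∀ x : (ZMod p)ˣ, g ^ (L x).val = x)
    (z : (ZMod p)ˣ) (hz : (z : ZMod p) = (2 : ZMod p)⁻¹)
    (C0B : Set (Sym2 (ZMod (p - 1))))
    (hC0B : C0B = {e | ∃ x y : (ZMod p)ˣ, e = s(L x, L y) ∧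
        (x : ZMod p) ∉ ({1, (2 : ZMod p)⁻¹, 2, -1} : Set (ZMod p)) ∧
        (y : ZMod p) ∉ ({1, (2 : ZMod p)⁻¹, 2, -1} : Set (ZMod p)) ∧
        (x : ZMod p) + (y : ZMod p) = 1} ∪ {s(L z, L (-1 : (ZMod p)ˣ))}) :
    IsPairing (p - 1) ((p - 3) / 2) C0B ∧ CCodeCond (p - 1) C0B := by
  have ne_zero {n : ℕ} (hn : 0 < n) (hnp : n < p) : (n : ZMod p) ≠ 0 := fun h ↦
    Nat.not_dvd_of_pos_of_lt hn hnp ((ZMod.natCast_eq_zero_iff n p).1 h)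
  have : NeZero (2 : ZMod p) := ⟨mod_cast ne_zero (n := 2) (by omega) (by omega)⟩
  have : NeZero (3 : ZMod p) := ⟨mod_cast ne_zero (n := 3) (by omega) (by omega)⟩
  have : NeZero (p - 1) := ⟨by omega⟩
  have card_units : Nat.card (ZMod p)ˣ = p - 1 := by
    rw [Nat.card_eq_fintype_card, ZMod.card_units]
  let e := zmodMulEquivOfGenerator hg card_units
  have exp_log (x : (ZMod p)ˣ) : discreteExp e (L x) = x := by
    rw [discreteExp.zmodMulEquivOfGenerator_apply, hL]
  rw [hC0B, ← columnGraph.edgeSet_zero_eq e exp_log hz]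
  have pairing := columnGraph.isPairing e
  rw [Nat.card_zmod] at pairing
  exact ⟨pairing, columnGraph.cCodeCond e⟩
end

section
/- Let p ≥ 5 be a prime and let g be a generator of (ℤ/pℤ)ˣ; for x ∈ (ℤ/pℤ)ˣ let ℓ(x) ∈ {0,…,p−2} be the unique integer with g^{ℓ(x)} = x. In Z_{2(p−1)} = ℤ/2(p−1)ℤ define S₀ = {{2ℓ(x), 2ℓ(x−1)+1} : x ∈ (ℤ/pℤ)ˣ, x ≠ 1} and S₁ = {{2ℓ(x)+1, 2ℓ(y)+1} : x,y ∈ (ℤ/pℤ)ˣ \ {1, 2⁻¹}, x+y = 1} ∪ {{2ℓ(x), 2ℓ(y)} : x,y ∈ (ℤ/pℤ)ˣ \ {1, 2⁻¹}, x+y = 1} ∪ {{2r̄, 2r̄+1}}, where r̄ ∈ {1,…,p−2} is the unique nonzero residue modulo p−1 not occurring in the set C₀^A = {{ℓ(x), ℓ(y)} : x,y ∈ (ℤ/pℤ)ˣ \ {1, 2⁻¹}, x+y = 1} of residues modulo p−1. Then (S₀,S₁) is an even 2-starter in Z_{2(p−1)}. -/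
/-!
A pair of nonzero field elements on the line `x - y = 1` or `x + y = 1` is determined by its
quotient `x / y`, and the discrete logarithm of this quotient governs the difference of the pair
of logarithms. The pairs of `S₀` have the signed differences `2 * log (x / y) - 1`, with `x / y`
running over all elements other than `1`: every odd residue occurs except `-1`, so up to sign `1`
occurs once and every other odd distance twice. For `x + y = 1` with `x ≠ y`, exchanging `x` and
`y` inverts the quotient, which runs over all elements other than `±1`: every even distance below
`n` occurs once among the pairs `{2 * log x, 2 * log y}` and once among their translates by `1`.
The pair `{2 * r, 2 * r + 1}` supplies the missing distance `1`.
-/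

section PairDist

variable {m : ℕ}

/-- The distance between the two points of an unordered pair on the cycle `ZMod m`: for `m ≠ 0`,
the only `d ≤ m / 2` which is a difference of the pair; `diffCount` counts the pairs at a given
distance. -/
def pairDist : Sym2 (ZMod m) → ℕ :=
  Sym2.lift ⟨fun x y => (x - y).valMinAbs.natAbs, fun x y => by
    simpa only [neg_sub] using ZMod.natAbs_valMinAbs_neg (y - x)⟩

lemma pairDist_mk (x y : ZMod m) : pairDist s(x, y) = (x - y).valMinAbs.natAbs := rfl

lemma pairDist_le [NeZero m] (e : Sym2 (ZMod m)) : pairDist e ≤ m / 2 := by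
  induction e with
  | h x y => exact ZMod.natAbs_valMinAbs_le _

lemma pairDist_eq_zero_iff (e : Sym2 (ZMod m)) : pairDist e = 0 ↔ e.IsDiag := by
  induction e with
  | h x y => rw [pairDist_mk, Int.natAbs_eq_zero, ZMod.valMinAbs_eq_zero, sub_eq_zero,
      Sym2.mk_isDiag_iff]

lemma pairDist_map_add_right (c : ZMod m) (e : Sym2 (ZMod m)) :
    pairDist (e.map (· + c)) = pairDist e := by
  induction e with
  | h x y => rw [Sym2.map_mk, pairDist_mk, pairDist_mk, add_sub_add_right_eq_sub]

lemma pairDist_mk_eq_iff [NeZero m] {d : ℕ} (hd : d ≤ m / 2) (x y : ZMod m) :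
    pairDist s(x, y) = d ↔ x - y = d ∨ y - x = d := by
  have hval : (d : ZMod m).valMinAbs.natAbs = d := by
    rw [ZMod.valMinAbs_natCast_of_le_half hd, Int.natAbs_natCast]
  rw [pairDist_mk, ← neg_sub x y, neg_eq_iff_eq_neg,
    ← ZMod.natAbs_valMinAbs_eq_natAbs_valMinAbs, hval]

lemma pairDist_mk_add_one (hm : 2 ≤ m) (a : ZMod m) : pairDist s(a, a + 1) = 1 := by
  have : NeZero m := ⟨by omega⟩
  rw [pairDist_mk_eq_iff (by omega), Nat.cast_one, add_sub_cancel_left]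
  exact .inr rfl

variable [NeZero m] {d : ℕ}

lemma diffCount_eq_ncard_pairDist (hd : d ≤ m / 2) (S : Set (Sym2 (ZMod m))) :
    diffCount m d S = (S ∩ {e | pairDist e = d}).ncard := by
  refine congrArg Set.ncard (Set.ext fun e => and_congr_right fun _ => ?_)
  constructor
  · rintro ⟨x, y, rfl, h⟩
    exact (pairDist_mk_eq_iff hd x y).2 h.symm
  · induction e with
    | h x y => exact fun h => ⟨x, y, rfl, ((pairDist_mk_eq_iff hd x y).1 h).symm⟩

lemma diffCount_union_of_disjoint {S T : Set (Sym2 (ZMod m))} (h : Disjoint S T)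
    (hd : d ≤ m / 2) :
    diffCount m d (S ∪ T) = diffCount m d S + diffCount m d T := by
  simp only [diffCount_eq_ncard_pairDist hd, Set.union_inter_distrib_right]
  exact Set.ncard_union_eq (h.mono Set.inter_subset_left Set.inter_subset_left)

lemma diffCount_of_bijOn {S : Set (Sym2 (ZMod m))} {D : Set ℕ} [DecidablePred (· ∈ D)]
    (h : Set.BijOn pairDist S D) (hd : d ≤ m / 2) :
    diffCount m d S = if d ∈ D then 1 else 0 := by
  have himage : pairDist '' (S ∩ {e | pairDist e = d}) = D ∩ {d} := by
    rw [← h.image_eq]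
    exact Set.image_inter_preimage pairDist S {d}
  rw [diffCount_eq_ncard_pairDist hd, ← (h.injOn.mono Set.inter_subset_left).ncard_image, himage]
  split_ifs with hdD
  · rw [Set.inter_eq_right.2 (Set.singleton_subset_iff.2 hdD), Set.ncard_singleton]
  · rw [Set.inter_singleton_eq_empty.2 hdD, Set.ncard_empty]

end PairDist

section ShiftSet

variable {m : ℕ}

lemma ncard_shiftSet (c : ZMod m) (S : Set (Sym2 (ZMod m))) : (shiftSet c S).ncard = S.ncard :=
  Set.ncard_image_of_injective S (Sym2.map.injective (add_left_injective c))

lemma bijOn_pairDist_shiftSet {S : Set (Sym2 (ZMod m))} {D : Set ℕ}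
    (h : Set.BijOn pairDist S D) (c : ZMod m) : Set.BijOn pairDist (shiftSet c S) D := by
  refine (Set.bijOn_comp_iff (Sym2.map.injective (add_left_injective c)).injOn).1 ?_
  exact h.congr fun e _ => (pairDist_map_add_right c e).symm

end ShiftSet

section Parity

variable {n : ℕ}

lemma two_mul_ne_two_mul_add_one (a b : ZMod (2 * n)) : 2 * a ≠ 2 * b + 1 := by
  intro h
  have hmod := congrArg (ZMod.castHom (dvd_mul_right 2 n) (ZMod 2)) h
  have htwo : (2 : ZMod 2) = 0 := CharTwo.two_eq_zero
  rw [map_add, map_mul, map_mul, map_one, map_ofNat, htwo, zero_mul, zero_mul, zero_add] at hmod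
  exact zero_ne_one hmod

lemma even_pairDist_two_mul [NeZero n] (a b : ZMod (2 * n)) :
    Even (pairDist s(2 * a, 2 * b)) := by
  by_contra hodd
  obtain ⟨q, hq⟩ := Nat.not_even_iff_odd.1 hodd
  rcases (pairDist_mk_eq_iff (hq ▸ pairDist_le _) _ _).1 hq with h | h
  · refine two_mul_ne_two_mul_add_one (a - b) q ?_
    push_cast at h
    linear_combination h
  · refine two_mul_ne_two_mul_add_one (b - a) q ?_
    push_cast at h
    linear_combination h

lemma not_even_pairDist_two_mul_two_mul_add_one [NeZero n] (a b : ZMod (2 * n)) :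
    ¬ Even (pairDist s(2 * a, 2 * b + 1)) := by
  intro heven
  obtain ⟨q, hq⟩ := even_iff_exists_two_mul.1 heven
  rcases (pairDist_mk_eq_iff (hq ▸ pairDist_le _) _ _).1 hq with h | h
  · refine two_mul_ne_two_mul_add_one (a - b - (q : ZMod (2 * n))) 0 ?_
    push_cast at h
    linear_combination h
  · refine two_mul_ne_two_mul_add_one ((q : ZMod (2 * n)) + a - b) 0 ?_
    push_cast at h
    linear_combination -h

end Parity

lemma ncard_setOf_even_pos_lt (n : ℕ) : {d | Even d ∧ 0 < d ∧ d < n}.ncard = (n - 1) / 2 := by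
  rw [← Nat.Ioc_filter_dvd_card_eq_div, ← Set.ncard_coe_finset]
  congr 1
  ext d
  simp only [Set.mem_ofPred_eq, Finset.coe_filter, Finset.mem_Ioc, even_iff_two_dvd]
  omega

section DiscreteLog

variable {G : Type*} [Group G] {g : G} {n : ℕ} {L : G → ℕ}

lemma two_mul_intCast_eq_iff_zpow_eq (hg : orderOf g = n) (a b : ℤ) :
    2 * (a : ZMod (2 * n)) = 2 * b ↔ g ^ a = g ^ b := by
  have hmod : ((2 * a : ℤ) : ZMod (2 * n)) = ((2 * b : ℤ) : ZMod (2 * n)) ↔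
      2 * a ≡ 2 * b [ZMOD 2 * n] := by
    simpa only [Nat.cast_mul, Nat.cast_ofNat] using
      ZMod.intCast_eq_intCast_iff (2 * a) (2 * b) (2 * n)
  rw [zpow_eq_zpow_iff_modEq, hg, ← Int.ModEq.mul_left_cancel_iff' two_ne_zero, ← hmod]
  push_cast
  rfl

lemma two_mul_log_sub_eq_iff (hg : orderOf g = n) (hL : ∀ x, g ^ L x = x) (x y : G) (k : ℤ) :
    2 * (L x : ZMod (2 * n)) - 2 * L y = 2 * k ↔ x / y = g ^ k := by
  have hdiv : x / y = g ^ (L x - L y : ℤ) := by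
    rw [zpow_sub, zpow_natCast, zpow_natCast, hL, hL, div_eq_mul_inv]
  rw [hdiv, ← two_mul_intCast_eq_iff_zpow_eq hg]
  push_cast
  rw [mul_sub]

lemma two_mul_log_injective (hg : orderOf g = n) (hL : ∀ x, g ^ L x = x) :
    Function.Injective fun x => 2 * (L x : ZMod (2 * n)) := by
  intro x y hxy
  have h := two_mul_log_sub_eq_iff hg hL x y 0
  rwa [zpow_zero, div_eq_one, Int.cast_zero, mul_zero, sub_eq_zero, iff_true_left hxy] at h

lemma two_mul_log_eq_zero_iff (hg : orderOf g = n) (hL : ∀ x, g ^ L x = x) {x : G} :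
    2 * (L x : ZMod (2 * n)) = 0 ↔ x = 1 := by
  have h := two_mul_intCast_eq_iff_zpow_eq hg (L x) 0
  rwa [Int.cast_natCast, Int.cast_zero, mul_zero, zpow_natCast, hL, zpow_zero] at h

lemma pairDist_two_mul_log_eq_iff [NeZero n] (hg : orderOf g = n) (hL : ∀ x, g ^ L x = x)
    {k : ℕ} (hk : 2 * k ≤ n) (x y : G) :
    pairDist s((2 * L x : ZMod (2 * n)), 2 * L y) = 2 * k ↔ x / y = g ^ k ∨ y / x = g ^ k := by
  rw [pairDist_mk_eq_iff (by omega), ← zpow_natCast, ← two_mul_log_sub_eq_iff hg hL,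
    ← two_mul_log_sub_eq_iff hg hL]
  push_cast
  rfl

lemma pairDist_two_mul_log_add_one_eq_iff [NeZero n] (hg : orderOf g = n)
    (hL : ∀ x, g ^ L x = x) {q : ℕ} (hq : 2 * q + 1 ≤ n) (x y : G) :
    pairDist s((2 * L x : ZMod (2 * n)), 2 * L y + 1) = 2 * q + 1 ↔
      x / y = g ^ (q + 1) ∨ x / y = (g ^ q)⁻¹ := by
  rw [pairDist_mk_eq_iff (by omega), ← zpow_natCast, ← zpow_natCast g q, ← zpow_neg,
    ← two_mul_log_sub_eq_iff hg hL, ← two_mul_log_sub_eq_iff hg hL]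
  push_cast
  refine or_congr ⟨fun h => ?_, fun h => ?_⟩ ⟨fun h => ?_, fun h => ?_⟩
  · linear_combination h
  · linear_combination h
  · linear_combination -h
  · linear_combination -h

end DiscreteLog

lemma orderOf_dvd_two_mul_iff {R : Type*} [Ring R] [NoZeroDivisors R] (g : Rˣ) (k : ℕ) :
    orderOf g ∣ 2 * k ↔ g ^ k = 1 ∨ g ^ k = -1 := by
  rw [orderOf_dvd_iff_pow_eq_one, mul_comm, pow_mul, sq, ← Units.inv_eq_self_iff,
    inv_eq_iff_mul_eq_one]

section UnitLine

variable {F : Type*} [Field F]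

/-- The points with distinct nonzero coordinates on the line `x + c * y = 1`. The starter uses
`c = -1` for the pairs `(x, x - 1)` and `c = 1` for the pairs with `x + y = 1`. -/
def unitLine (c : F) : Set (Fˣ × Fˣ) := {z | z.1 ≠ z.2 ∧ (z.1 : F) + c * z.2 = 1}

lemma bijOn_div_unitLine (c : F) :
    Set.BijOn (fun z : Fˣ × Fˣ => z.1 / z.2) (unitLine c) {u | u ≠ 1 ∧ (u : F) + c ≠ 0} := by
  have slope : ∀ x y : Fˣ, (x : F) + c * y = 1 → ((x / y : Fˣ) : F) + c = (y : F)⁻¹ := by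
    intro x y h
    rw [Units.val_div_eq_div_val]
    field_simp
    linear_combination h
  refine ⟨?_, ?_, ?_⟩
  · rintro ⟨x, y⟩ ⟨hne, h⟩
    exact ⟨div_ne_one.2 hne, slope x y h ▸ inv_ne_zero y.ne_zero⟩
  · rintro ⟨x, y⟩ ⟨-, h⟩ ⟨x', y'⟩ ⟨-, h'⟩ (hdiv : x / y = x' / y')
    have hy : y = y' := Units.ext (inv_injective (by rw [← slope x y h, hdiv, slope x' y' h']))
    rw [hy, div_left_inj] at hdiv
    rw [hdiv, hy]
  · rintro u ⟨hu, huc⟩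
    refine ⟨(u * (Units.mk0 _ huc)⁻¹, (Units.mk0 _ huc)⁻¹), ⟨?_, ?_⟩, mul_div_cancel_right _ _⟩
    · exact fun h => hu (mul_eq_right.1 h)
    · rw [Units.val_mul, ← add_mul]
      exact (Units.mk0 _ huc).mul_inv

lemma bijOn_div_unitLine_one :
    Set.BijOn (fun z : Fˣ × Fˣ => z.1 / z.2) (unitLine (1 : F)) {u | u ≠ 1 ∧ u ≠ -1} := by
  convert bijOn_div_unitLine (1 : F) using 4 with u
  rw [ne_eq, Units.ext_iff, Units.val_neg, Units.val_one, eq_neg_iff_add_eq_zero]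

lemma bijOn_div_unitLine_neg_one :
    Set.BijOn (fun z : Fˣ × Fˣ => z.1 / z.2) (unitLine (-1 : F)) {1}ᶜ := by
  convert bijOn_div_unitLine (-1 : F) using 1
  ext u
  simp only [Set.mem_compl_singleton_iff, Set.mem_ofPred_eq, ← sub_eq_add_neg, sub_ne_zero,
    Units.val_eq_one, ne_eq, and_self]

lemma mk_mem_unitLine_one {x y : Fˣ} :
    (x, y) ∈ unitLine (1 : F) ↔ x ≠ y ∧ (x : F) + y = 1 := by
  simp only [unitLine, Set.mem_ofPred_eq, one_mul]

lemma mk_mem_unitLine_neg_one {x y : Fˣ} :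
    (x, y) ∈ unitLine (-1 : F) ↔ (x : F) = y + 1 := by
  simp only [unitLine, Set.mem_ofPred_eq, neg_one_mul, ← sub_eq_add_neg, sub_eq_iff_eq_add']
  refine and_iff_right_of_imp ?_
  rintro h rfl
  exact one_ne_zero (left_eq_add.1 h)

lemma swap_mem_unitLine_one {x y : Fˣ} (h : (x, y) ∈ unitLine (1 : F)) :
    (y, x) ∈ unitLine (1 : F) := by
  rw [mk_mem_unitLine_one, ne_comm, add_comm]
  exact mk_mem_unitLine_one.1 h

lemma ne_one_of_add_eq_one {x y : Fˣ} (h : (x : F) + y = 1) : x ≠ 1 := by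
  rintro rfl
  exact y.ne_zero (add_eq_left.1 h)

lemma ne_one_of_eq_add_one {x y : Fˣ} (h : (x : F) = y + 1) : x ≠ 1 := by
  rintro rfl
  exact y.ne_zero (right_eq_add.1 h)

end UnitLine

section StarterZero

variable {F : Type*} [Field F] {g : Fˣ} {n : ℕ} {L : Fˣ → ℕ}

/-- The set `S₀` of the starter, for the discrete logarithm `L` (see `starterZero_eq_setOf`). -/
def starterZero (n : ℕ) (L : Fˣ → ℕ) : Set (Sym2 (ZMod (2 * n))) :=
  (fun z : Fˣ × Fˣ => s(2 * (L z.1 : ZMod (2 * n)), 2 * L z.2 + 1)) '' unitLine (-1 : F)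

lemma mk_two_mul_log_add_one_injective (hg : orderOf g = n) (hL : ∀ x, g ^ L x = x) :
    Function.Injective
      fun z : Fˣ × Fˣ => s(2 * (L z.1 : ZMod (2 * n)), 2 * L z.2 + 1) := by
  rintro ⟨x, y⟩ ⟨x', y'⟩ h
  rcases Sym2.eq_iff.1 h with ⟨hx, hy⟩ | ⟨hx, -⟩
  · exact Prod.ext (two_mul_log_injective hg hL hx)
      (two_mul_log_injective hg hL (add_right_cancel hy))
  · exact absurd hx (two_mul_ne_two_mul_add_one _ _)

lemma ncard_starterZero [Finite F] (hn : Nat.card Fˣ = n) (hg : orderOf g = n)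
    (hL : ∀ x, g ^ L x = x) : (starterZero n L).ncard = n - 1 := by
  rw [starterZero, Set.ncard_image_of_injective _ (mk_two_mul_log_add_one_injective hg hL),
    bijOn_div_unitLine_neg_one.ncard_eq, Set.ncard_compl, Set.ncard_singleton, hn]

lemma zero_notMem_of_mem_starterZero (hg : orderOf g = n) (hL : ∀ x, g ^ L x = x)
    {e : Sym2 (ZMod (2 * n))} (he : e ∈ starterZero n L) : 0 ∉ e := by
  obtain ⟨⟨x, y⟩, hxy, rfl⟩ := he
  rw [Sym2.mem_iff, not_or]
  constructor
  · rw [eq_comm, two_mul_log_eq_zero_iff hg hL]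
    exact ne_one_of_eq_add_one (mk_mem_unitLine_neg_one.1 hxy)
  · simpa only [mul_zero] using two_mul_ne_two_mul_add_one 0 (L y : ZMod (2 * n))

variable [NeZero n]

lemma not_even_pairDist_of_mem_starterZero {e : Sym2 (ZMod (2 * n))}
    (he : e ∈ starterZero n L) : ¬ Even (pairDist e) := by
  obtain ⟨⟨x, y⟩, -, rfl⟩ := he
  exact not_even_pairDist_two_mul_two_mul_add_one _ _

lemma diffCount_starterZero_two_mul_add_one (hg : orderOf g = n) (hL : ∀ x, g ^ L x = x)
    {q : ℕ} (hq : 2 * q + 1 ≤ n) :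
    diffCount (2 * n) (2 * q + 1) (starterZero n L) =
      ({1}ᶜ ∩ {g ^ (q + 1), (g ^ q)⁻¹} : Set Fˣ).ncard := by
  have hpre : (fun z : Fˣ × Fˣ => s(2 * (L z.1 : ZMod (2 * n)), 2 * L z.2 + 1)) ⁻¹'
      {e | pairDist e = 2 * q + 1} = (fun z => z.1 / z.2) ⁻¹' {g ^ (q + 1), (g ^ q)⁻¹} :=
    Set.ext fun z => pairDist_two_mul_log_add_one_eq_iff hg hL hq z.1 z.2
  rw [diffCount_eq_ncard_pairDist (by omega), starterZero, ← Set.image_inter_preimage, hpre,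
    Set.ncard_image_of_injective _ (mk_two_mul_log_add_one_injective hg hL),
    ← bijOn_div_unitLine_neg_one.image_eq, ← Set.image_inter_preimage]
  exact (bijOn_div_unitLine_neg_one.injOn.mono Set.inter_subset_left).ncard_image.symm

lemma diffCount_starterZero (hg : orderOf g = n) (hL : ∀ x, g ^ L x = x) {d : ℕ} (hd : d < n) :
    diffCount (2 * n) d (starterZero n L) = if Even d then 0 else if d = 1 then 1 else 2 := by
  have pow_ne_one : ∀ k, 0 < k → k < n → g ^ k ≠ 1 := fun k h0 hk =>
    pow_ne_one_of_lt_orderOf h0.ne' (hg ▸ hk)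
  split_ifs with heven hd1
  · rw [diffCount_eq_ncard_pairDist (by omega), Set.ncard_eq_zero, Set.eq_empty_iff_forall_notMem]
    rintro e ⟨he, rfl⟩
    exact not_even_pairDist_of_mem_starterZero he heven
  · subst hd1
    rw [diffCount_starterZero_two_mul_add_one hg hL (q := 0) (by omega), Set.ncard_eq_one]
    have hg1 : g ≠ 1 := pow_one g ▸ pow_ne_one 1 one_pos hd
    refine ⟨g, ?_⟩
    rw [zero_add, pow_one, pow_zero, inv_one, Set.inter_comm, Set.insert_inter_of_mem hg1,
      Set.inter_compl_self, insert_empty_eq]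
  · obtain ⟨q, rfl⟩ := Nat.not_even_iff_odd.1 heven
    have hne : g ^ (q + 1) ≠ (g ^ q)⁻¹ := by
      rw [ne_eq, eq_inv_iff_mul_eq_one, ← pow_add]
      exact pow_ne_one _ (by omega) (by omega)
    have hsub : ({g ^ (q + 1), (g ^ q)⁻¹} : Set Fˣ) ⊆ {1}ᶜ := by
      refine Set.pair_subset (pow_ne_one _ (by omega) (by omega)) ?_
      exact inv_ne_one.2 (pow_ne_one _ (by omega) (by omega))
    rw [diffCount_starterZero_two_mul_add_one hg hL hd.le, Set.inter_eq_right.2 hsub,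
      Set.ncard_pair hne]

end StarterZero

section EvenPairs

variable {F : Type*} [Field F] {g : Fˣ} {n : ℕ} {L : Fˣ → ℕ}

/-- The pairs `{2 * L x, 2 * L y}` of `S₁`; their translate by `1` consists of the pairs
`{2 * L x + 1, 2 * L y + 1}`. -/
def evenPairs (n : ℕ) (L : Fˣ → ℕ) : Set (Sym2 (ZMod (2 * n))) :=
  (fun z : Fˣ × Fˣ => s(2 * (L z.1 : ZMod (2 * n)), 2 * L z.2)) '' unitLine (1 : F)

lemma exists_eq_of_mem_evenPairs {e : Sym2 (ZMod (2 * n))} (he : e ∈ evenPairs n L)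
    {a : ZMod (2 * n)} (ha : a ∈ e) : ∃ x : Fˣ, x ≠ 1 ∧ a = 2 * L x := by
  obtain ⟨⟨x, y⟩, hxy, rfl⟩ := he
  rcases Sym2.mem_iff.1 ha with rfl | rfl
  · exact ⟨x, ne_one_of_add_eq_one (mk_mem_unitLine_one.1 hxy).2, rfl⟩
  · exact ⟨y, ne_one_of_add_eq_one (mk_mem_unitLine_one.1 (swap_mem_unitLine_one hxy)).2, rfl⟩

lemma exists_eq_of_mem_shiftSet_evenPairs {e : Sym2 (ZMod (2 * n))}
    (he : e ∈ shiftSet 1 (evenPairs n L)) {a : ZMod (2 * n)} (ha : a ∈ e) :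
    ∃ x : Fˣ, x ≠ 1 ∧ a = 2 * L x + 1 := by
  obtain ⟨e, he, rfl⟩ := he
  obtain ⟨b, hb, rfl⟩ := Sym2.mem_map.1 ha
  obtain ⟨x, hx, rfl⟩ := exists_eq_of_mem_evenPairs he hb
  exact ⟨x, hx, rfl⟩

lemma disjoint_evenPairs_shiftSet :
    Disjoint (evenPairs n L) (shiftSet 1 (evenPairs n L)) := by
  rw [Set.disjoint_left]
  intro e he he'
  obtain ⟨x, -, hx⟩ := exists_eq_of_mem_evenPairs he e.out_fst_mem
  obtain ⟨y, -, hy⟩ := exists_eq_of_mem_shiftSet_evenPairs he' e.out_fst_mem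
  exact two_mul_ne_two_mul_add_one _ _ (hx.symm.trans hy)

variable [NeZero n]

lemma exists_div_eq_pow_of_mem_evenPairs (hg : orderOf g = n) (hL : ∀ x, g ^ L x = x)
    {e : Sym2 (ZMod (2 * n))} (he : e ∈ evenPairs n L) {k : ℕ} (hk : pairDist e = 2 * k) :
    ∃ z ∈ unitLine (1 : F), z.1 / z.2 = g ^ k ∧
      e = s(2 * (L z.1 : ZMod (2 * n)), 2 * L z.2) := by
  have hkn : 2 * k ≤ n := by
    have := pairDist_le e
    omega
  obtain ⟨⟨x, y⟩, hxy, rfl⟩ := he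
  rcases (pairDist_two_mul_log_eq_iff hg hL hkn x y).1 hk with h | h
  · exact ⟨(x, y), hxy, h, rfl⟩
  · exact ⟨(y, x), swap_mem_unitLine_one hxy, h, Sym2.eq_swap⟩

lemma bijOn_pairDist_evenPairs (hg : orderOf g = n) (hL : ∀ x, g ^ L x = x) :
    Set.BijOn pairDist (evenPairs n L) {d | Even d ∧ 0 < d ∧ d < n} := by
  have even_pairDist : ∀ e ∈ evenPairs n L, ∃ k, pairDist e = 2 * k := by
    rintro _ ⟨⟨x, y⟩, -, rfl⟩
    exact even_iff_exists_two_mul.1 (even_pairDist_two_mul _ _)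
  refine ⟨fun e he => ?_, fun e he e' he' hee' => ?_, ?_⟩
  · obtain ⟨k, hk⟩ := even_pairDist e he
    obtain ⟨z, hz, hdiv, -⟩ := exists_div_eq_pow_of_mem_evenPairs hg hL he hk
    have hndvd : ¬ n ∣ 2 * k := by
      rw [← hg, orderOf_dvd_two_mul_iff, ← hdiv, not_or]
      exact bijOn_div_unitLine_one.mapsTo hz
    have hle := pairDist_le e
    have hzero : 2 * k ≠ 0 := fun h => hndvd (h ▸ dvd_zero n)
    have hhalf : 2 * k ≠ n := fun h => hndvd h.symm.dvd
    refine ⟨⟨k, by omega⟩, ?_⟩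
    omega
  · obtain ⟨k, hk⟩ := even_pairDist e he
    obtain ⟨z, hz, hdiv, rfl⟩ := exists_div_eq_pow_of_mem_evenPairs hg hL he hk
    obtain ⟨z', hz', hdiv', rfl⟩ :=
      exists_div_eq_pow_of_mem_evenPairs hg hL he' (hee' ▸ hk)
    rw [bijOn_div_unitLine_one.injOn hz hz' (hdiv.trans hdiv'.symm)]
  · rintro d ⟨heven, hpos, hlt⟩
    obtain ⟨k, rfl⟩ := even_iff_exists_two_mul.1 heven
    have hpow : g ^ k ≠ 1 ∧ g ^ k ≠ -1 := by
      rw [← not_or, ← orderOf_dvd_two_mul_iff, hg]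
      exact Nat.not_dvd_of_pos_of_lt hpos hlt
    obtain ⟨z, hz, hdiv⟩ := bijOn_div_unitLine_one.surjOn hpow
    exact ⟨_, ⟨z, hz, rfl⟩, (pairDist_two_mul_log_eq_iff hg hL hlt.le _ _).2 (.inl hdiv)⟩

end EvenPairs

section StarterOne

variable {F : Type*} [Field F] {g : Fˣ} {n : ℕ} {L : Fˣ → ℕ} {r : ℕ}

/-- The set `S₁` of the starter, for the discrete logarithm `L` and the extra pair
`{2 * r, 2 * r + 1}`. -/
def starterOne (n : ℕ) (L : Fˣ → ℕ) (r : ℕ) : Set (Sym2 (ZMod (2 * n))) :=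
  evenPairs n L ∪ shiftSet 1 (evenPairs n L) ∪ {s(2 * (r : ZMod (2 * n)), 2 * r + 1)}

lemma disjoint_union_shiftSet_singleton :
    Disjoint (evenPairs n L ∪ shiftSet 1 (evenPairs n L))
      {s(2 * (r : ZMod (2 * n)), 2 * r + 1)} := by
  rw [Set.disjoint_singleton_right]
  rintro (he | he)
  · obtain ⟨x, -, hx⟩ := exists_eq_of_mem_evenPairs he (Sym2.mem_mk_right _ _)
    exact two_mul_ne_two_mul_add_one _ _ hx.symm
  · obtain ⟨x, -, hx⟩ := exists_eq_of_mem_shiftSet_evenPairs he (Sym2.mem_mk_left _ _)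
    exact two_mul_ne_two_mul_add_one _ _ hx

lemma one_notMem_of_mem_starterOne (hg : orderOf g = n) (hL : ∀ x, g ^ L x = x)
    (hr : ¬ n ∣ r) {e : Sym2 (ZMod (2 * n))} (he : e ∈ starterOne n L r) : 1 ∉ e := by
  have one_ne_two_mul : ∀ a : ZMod (2 * n), 1 ≠ 2 * a := fun a h =>
    two_mul_ne_two_mul_add_one a 0 (by rw [mul_zero, zero_add, h])
  intro hone
  obtain (he | he) | rfl := he
  · obtain ⟨x, -, hx⟩ := exists_eq_of_mem_evenPairs he hone
    exact one_ne_two_mul _ hx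
  · obtain ⟨x, hx1, hx⟩ := exists_eq_of_mem_shiftSet_evenPairs he hone
    exact hx1 ((two_mul_log_eq_zero_iff hg hL).1 (right_eq_add.1 hx))
  · rcases Sym2.mem_iff.1 hone with h | h
    · exact one_ne_two_mul _ h
    · have hzero : 2 * ((r : ℤ) : ZMod (2 * n)) = 2 * ((0 : ℤ) : ZMod (2 * n)) := by
        push_cast
        linear_combination -h
      rw [two_mul_intCast_eq_iff_zpow_eq hg, zpow_natCast, zpow_zero] at hzero
      exact hr (hg ▸ orderOf_dvd_of_pow_eq_one hzero)

variable [NeZero n]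

lemma not_isDiag_of_mem_starterOne (hg : orderOf g = n) (hL : ∀ x, g ^ L x = x)
    {e : Sym2 (ZMod (2 * n))} (he : e ∈ starterOne n L r) : ¬ e.IsDiag := by
  have hbij := bijOn_pairDist_evenPairs hg hL
  have := NeZero.pos n
  rw [← pairDist_eq_zero_iff]
  obtain (he | he) | rfl := he
  · exact (hbij.mapsTo he).2.1.ne'
  · exact ((bijOn_pairDist_shiftSet hbij 1).mapsTo he).2.1.ne'
  · rw [pairDist_mk_add_one (by omega)]
    exact one_ne_zero

lemma ncard_starterOne (hn : Even n) (hg : orderOf g = n) (hL : ∀ x, g ^ L x = x) :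
    (starterOne n L r).ncard = n - 1 := by
  have hncard : (evenPairs n L).ncard = (n - 1) / 2 :=
    (bijOn_pairDist_evenPairs hg hL).ncard_eq.trans (ncard_setOf_even_pos_lt n)
  rw [starterOne, Set.ncard_union_eq disjoint_union_shiftSet_singleton,
    Set.ncard_union_eq disjoint_evenPairs_shiftSet, ncard_shiftSet, Set.ncard_singleton, hncard]
  have := NeZero.pos n
  grind

lemma diffCount_starterOne (hg : orderOf g = n) (hL : ∀ x, g ^ L x = x) {d : ℕ}
    (hd : 0 < d) (hdn : d < n) :
    diffCount (2 * n) d (starterOne n L r) = if Even d then 2 else if d = 1 then 1 else 0 := by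
  have hbij := bijOn_pairDist_evenPairs hg hL
  have hsingle : Set.BijOn pairDist {s(2 * (r : ZMod (2 * n)), 2 * r + 1)} {1} :=
    Set.bijOn_singleton.2 (pairDist_mk_add_one (by omega) _)
  have hdhalf : d ≤ 2 * n / 2 := by omega
  classical
  rw [starterOne, diffCount_union_of_disjoint disjoint_union_shiftSet_singleton hdhalf,
    diffCount_union_of_disjoint disjoint_evenPairs_shiftSet hdhalf,
    diffCount_of_bijOn hbij hdhalf, diffCount_of_bijOn (bijOn_pairDist_shiftSet hbij 1) hdhalf,
    diffCount_of_bijOn hsingle hdhalf]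
  simp only [Set.mem_ofPred_eq, Set.mem_singleton_iff]
  grind

end StarterOne

section SetBuilder

variable {F : Type*} [Field F] (n : ℕ) (L : Fˣ → ℕ)

lemma starterZero_eq_setOf :
    starterZero n L = {e | ∃ x y : Fˣ, x ≠ 1 ∧ (x : F) = y + 1 ∧
      e = s(((2 * L x : ℕ) : ZMod (2 * n)), ((2 * L y + 1 : ℕ) : ZMod (2 * n)))} := by
  ext e
  simp only [starterZero, Set.mem_image, Prod.exists, mk_mem_unitLine_neg_one, Set.mem_ofPred_eq,
    Nat.cast_add, Nat.cast_mul, Nat.cast_ofNat, Nat.cast_one]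
  exact exists₂_congr fun x y =>
    ⟨fun ⟨h, he⟩ => ⟨ne_one_of_eq_add_one h, h, he.symm⟩, fun ⟨_, h, he⟩ => ⟨h, he.symm⟩⟩

lemma ne_inv_two_iff_of_add_eq_one (hF : ringChar F ≠ 2) {x y : F} (h : x + y = 1) :
    x ≠ 2⁻¹ ↔ x ≠ y := by
  have htwo : (2 : F) ≠ 0 := Ring.two_ne_zero hF
  rw [ne_eq, ← mul_eq_one_iff_eq_inv₀ htwo, mul_two, ← h, add_right_inj]

lemma mk_mem_unitLine_one_iff_ne_inv_two (hF : ringChar F ≠ 2) {x y : Fˣ} :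
    (x, y) ∈ unitLine (1 : F) ↔
      x ≠ 1 ∧ y ≠ 1 ∧ (x : F) ≠ 2⁻¹ ∧ (y : F) ≠ 2⁻¹ ∧ (x : F) + y = 1 := by
  rw [mk_mem_unitLine_one]
  constructor
  · rintro ⟨hne, h⟩
    have h' := (add_comm (y : F) x).trans h
    exact ⟨ne_one_of_add_eq_one h, ne_one_of_add_eq_one h',
      (ne_inv_two_iff_of_add_eq_one hF h).2 (Units.val_injective.ne hne),
      (ne_inv_two_iff_of_add_eq_one hF h').2 (Units.val_injective.ne hne.symm), h⟩
  · rintro ⟨-, -, hx, -, h⟩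
    exact ⟨fun hxy => (ne_inv_two_iff_of_add_eq_one hF h).1 hx (congrArg Units.val hxy), h⟩

lemma starterOne_eq_setOf (hF : ringChar F ≠ 2) (r : ℕ) :
    starterOne n L r = {e | ∃ x y : Fˣ,
        (x ≠ 1 ∧ y ≠ 1 ∧ (x : F) ≠ 2⁻¹ ∧ (y : F) ≠ 2⁻¹ ∧ (x : F) + y = 1) ∧
        (e = s(((2 * L x + 1 : ℕ) : ZMod (2 * n)), ((2 * L y + 1 : ℕ) : ZMod (2 * n))) ∨
          e = s(((2 * L x : ℕ) : ZMod (2 * n)), ((2 * L y : ℕ) : ZMod (2 * n))))} ∪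
      {s(((2 * r : ℕ) : ZMod (2 * n)), ((2 * r + 1 : ℕ) : ZMod (2 * n)))} := by
  simp only [starterOne, Nat.cast_add, Nat.cast_mul, Nat.cast_ofNat, Nat.cast_one]
  congr 1
  ext e
  simp only [← mk_mem_unitLine_one_iff_ne_inv_two hF, evenPairs, shiftSet, Set.mem_union,
    Set.image_image, Set.mem_image, Prod.exists, Sym2.map_mk, Set.mem_ofPred_eq, ← exists_or,
    ← and_or_left, eq_comm (b := e)]
  exact exists₂_congr fun x y => and_congr_right fun _ => or_comm

end SetBuilder

theorem stmt16_general {F : Type*} [Field F] [Finite F] (hF : ringChar F ≠ 2) {n : ℕ}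
    (hn : Nat.card Fˣ = n) {g : Fˣ} {L : Fˣ → ℕ} (hL : ∀ x, g ^ L x = x) {r : ℕ} (hr : ¬ n ∣ r) :
    IsEven2Starter n (starterZero n L) (starterOne n L r) := by
  have hg : orderOf g = n :=
    hn ▸ orderOf_eq_card_of_forall_mem_zpowers fun x => ⟨L x, (zpow_natCast g _).trans (hL x)⟩
  have heven : Even n := by
    have := Fintype.ofFinite F
    rw [← hn, Nat.card_units, Nat.card_eq_fintype_card]
    exact Nat.Odd.sub_odd (Nat.odd_iff.2 (FiniteField.odd_card_of_char_ne_two hF)) odd_one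
  have : NeZero n := ⟨hn ▸ Nat.card_pos.ne'⟩
  refine ⟨ncard_starterZero hn hg hL, ncard_starterOne heven hg hL, fun e he hdiag => ?_,
    fun e => not_isDiag_of_mem_starterOne hg hL, fun e => zero_notMem_of_mem_starterZero hg hL,
    fun e => one_notMem_of_mem_starterOne hg hL hr, fun d hd hdn => ?_⟩
  · exact not_even_pairDist_of_mem_starterZero he ((pairDist_eq_zero_iff e).2 hdiag ▸ Even.zero)
  · rw [diffCount_starterZero hg hL (by omega), diffCount_starterOne hg hL hd (by omega)]
    split_ifs <;> rfl

/-- Let `p ≥ 5` be prime, `g` a generator of `(ZMod p)ˣ`, `L` the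
integer discrete logarithm (`L x ∈ {0,…,p-2}`, `g ^ L x = x`), and `r ∈ {1,…,p-2}` the
residue not occurring in `C₀^A = {{L x, L y} : x,y ∉ {1,2⁻¹}, x+y=1}`. Then the pair
`(S₀, S₁)` defined in `ZMod (2(p-1))` by
`S₀ = {{2L x, 2L (x-1) + 1} : x ≠ 1}` and
`S₁ = {{2L x + 1, 2L y + 1} : x+y=1, x,y ∉ {1,2⁻¹}} ∪ {{2L x, 2L y} : …} ∪ {{2r, 2r+1}}`
is an even 2-starter in `ZMod (2(p-1))`. -/
theorem stmt16 (p : ℕ) [Fact p.Prime] (hp : 5 ≤ p)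
    (g : (ZMod p)ˣ) (hg : ∀ u : (ZMod p)ˣ, u ∈ Subgroup.zpowers g)
    (L : (ZMod p)ˣ → ℕ) (hL : ∀ x : (ZMod p)ˣ, L x ≤ p - 2 ∧ g ^ (L x) = x)
    (r : ℕ) (hr1 : 1 ≤ r) (hr2 : r ≤ p - 2)
    (hrmiss : ∀ x y : (ZMod p)ˣ,
      x ≠ 1 → y ≠ 1 → (x : ZMod p) ≠ (2 : ZMod p)⁻¹ → (y : ZMod p) ≠ (2 : ZMod p)⁻¹ →
      (x : ZMod p) + (y : ZMod p) = 1 → r ≠ L x ∧ r ≠ L y)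
    (S0 S1 : Set (Sym2 (ZMod (2*(p-1)))))
    (hS0 : S0 = {e | ∃ x y : (ZMod p)ˣ, x ≠ 1 ∧ (x : ZMod p) = (y : ZMod p) + 1 ∧
      e = s(((2 * L x : ℕ) : ZMod (2*(p-1))), ((2 * L y + 1 : ℕ) : ZMod (2*(p-1))))})
    (hS1 : S1 = {e | ∃ x y : (ZMod p)ˣ,
        (x ≠ 1 ∧ y ≠ 1 ∧ (x : ZMod p) ≠ (2 : ZMod p)⁻¹ ∧ (y : ZMod p) ≠ (2 : ZMod p)⁻¹ ∧
          (x : ZMod p) + (y : ZMod p) = 1) ∧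
        (e = s(((2 * L x + 1 : ℕ) : ZMod (2*(p-1))), ((2 * L y + 1 : ℕ) : ZMod (2*(p-1)))) ∨
         e = s(((2 * L x : ℕ) : ZMod (2*(p-1))), ((2 * L y : ℕ) : ZMod (2*(p-1)))))} ∪
      {s(((2 * r : ℕ) : ZMod (2*(p-1))), ((2 * r + 1 : ℕ) : ZMod (2*(p-1))))}) :
    IsEven2Starter (p - 1) S0 S1 := by
  have hF : ringChar (ZMod p) ≠ 2 := by rw [ZMod.ringChar_zmod_n]; omega
  rw [hS0, hS1, ← starterZero_eq_setOf, ← starterOne_eq_setOf _ _ hF]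
  exact stmt16_general hF (Nat.card_eq_fintype_card.trans (ZMod.card_units p)) (fun x => (hL x).2)
    (Nat.not_dvd_of_pos_of_lt hr1 (by omega))
end
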